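/- arXiv:2406.02971 — 2 statements merged into one kernel-verified Lean document; each statement's English description precedes it below -/
import Mathlib

section
/- For every k ≥ 2, the sequence (minS_k(n)/n)_{n ≥ 1} converges to a finite real limit L_k as n → ∞. -/
/-!
The entropy is superadditive under concatenation: gluing an occurrence of `u₁` in `w₁` to one of
`u₂` in `w₂` gives an occurrence of `u₁ ++ u₂` in `w₁ ++ w₂`, so
`maxocc w₁ * maxocc w₂ ≤ maxocc (w₁ ++ w₂)` (`maxocc_mul_le`). Splitting a word of length `m + n`
after its `m`-th letter therefore gives `minS k m + minS k n ≤ minS k (m + n)`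
(`minS_superadditive`). As a word of length `n` has only `2 ^ n` sublists, `minS k n ≤ n`, and
Fekete's lemma, applied to `-minS k`, yields the limit.
-/

open List Real

/-- `occ w u` is the number of occurrences of `u` as a subword (subsequence) of `w`,
i.e. the multiplicity of `u` among the `2^|w|` sublists of `w`. -/
def occ {α : Type*} [DecidableEq α] (w u : List α) : ℕ := w.sublists.count u

/-- `maxocc w` is the maximal number of occurrences of any subword of `w`. -/
noncomputable def maxocc {α : Type*} [DecidableEq α] (w : List α) : ℕ :=
  sSup {n : ℕ | ∃ u : List α, occ w u = n}

/-- `minS k n` is the minimal subword entropy `log₂ (maxocc w)` over words `w`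
of length `n` over the alphabet `Fin k`. -/
noncomputable def minS (k n : ℕ) : ℝ :=
  sInf {s : ℝ | ∃ w : List (Fin k), w.length = n ∧ s = Real.logb 2 (maxocc w)}

lemma count_mul_le_sum_map {β : Type*} [BEq β] [LawfulBEq β] (l : List β) (b : β) (g : β → ℕ) :
    l.count b * g b ≤ (l.map g).sum := by
  induction l with
  | nil => simp
  | cons a l ih =>
    by_cases h : a = b
    · subst h
      simp only [List.count_cons_self, List.map_cons, List.sum_cons]
      linarith
    · rw [List.count_cons_of_ne h, List.map_cons, List.sum_cons]
      omega

lemma occ_mul_le {α : Type*} [DecidableEq α] (w₁ w₂ u₁ u₂ : List α) :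
    occ w₁ u₁ * occ w₂ u₂ ≤ occ (w₁ ++ w₂) (u₁ ++ u₂) := by
  unfold occ
  have h : (w₁ ++ w₂).sublists = w₂.sublists.flatMap fun x => w₁.sublists.map (· ++ x) :=
    List.sublists_append w₁ w₂
  rw [h, List.count_flatMap]
  -- Keep only the sublists of `w₁ ++ w₂` whose part in `w₂` is exactly `u₂`.
  refine le_trans (le_of_eq ?_) (count_mul_le_sum_map _ u₂ _)
  simp only [Function.comp]
  rw [List.count_map_of_injective _ (· ++ u₂) (List.append_left_injective u₂), mul_comm]

lemma occ_le {α : Type*} [DecidableEq α] (w u : List α) : occ w u ≤ 2 ^ w.length := by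
  rw [← List.length_sublists]
  exact List.count_le_length

lemma bddAbove_occ {α : Type*} [DecidableEq α] (w : List α) :
    BddAbove {n : ℕ | ∃ u : List α, occ w u = n} := by
  refine ⟨2 ^ w.length, ?_⟩
  rintro _ ⟨u, rfl⟩
  exact occ_le w u

lemma occ_le_maxocc {α : Type*} [DecidableEq α] (w u : List α) : occ w u ≤ maxocc w :=
  le_csSup (bddAbove_occ w) ⟨u, rfl⟩

lemma exists_occ_eq_maxocc {α : Type*} [DecidableEq α] (w : List α) :
    ∃ u : List α, occ w u = maxocc w :=
  Nat.sSup_mem (s := {n : ℕ | ∃ u : List α, occ w u = n}) ⟨_, [], rfl⟩ (bddAbove_occ w)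

lemma maxocc_le {α : Type*} [DecidableEq α] (w : List α) : maxocc w ≤ 2 ^ w.length := by
  obtain ⟨u, hu⟩ := exists_occ_eq_maxocc w
  exact hu ▸ occ_le w u

lemma maxocc_pos {α : Type*} [DecidableEq α] (w : List α) : 0 < maxocc w := by
  refine lt_of_lt_of_le ?_ (occ_le_maxocc w w)
  exact List.count_pos_iff.2 (List.mem_sublists.2 (List.Sublist.refl w))

lemma maxocc_mul_le {α : Type*} [DecidableEq α] (w₁ w₂ : List α) :
    maxocc w₁ * maxocc w₂ ≤ maxocc (w₁ ++ w₂) := by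
  obtain ⟨u₁, h₁⟩ := exists_occ_eq_maxocc w₁
  obtain ⟨u₂, h₂⟩ := exists_occ_eq_maxocc w₂
  rw [← h₁, ← h₂]
  exact (occ_mul_le w₁ w₂ u₁ u₂).trans (occ_le_maxocc _ _)

lemma entropy_nonneg {α : Type*} [DecidableEq α] (w : List α) :
    0 ≤ Real.logb 2 (maxocc w) :=
  Real.logb_nonneg one_lt_two (by exact_mod_cast maxocc_pos w)

lemma entropy_le_length {α : Type*} [DecidableEq α] (w : List α) :
    Real.logb 2 (maxocc w) ≤ w.length := by
  rw [Real.logb_le_iff_le_rpow one_lt_two (by exact_mod_cast maxocc_pos w), Real.rpow_natCast]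
  exact_mod_cast maxocc_le w

lemma entropy_add_le {α : Type*} [DecidableEq α] (w₁ w₂ : List α) :
    Real.logb 2 (maxocc w₁) + Real.logb 2 (maxocc w₂) ≤ Real.logb 2 (maxocc (w₁ ++ w₂)) := by
  have h₁ : (0 : ℝ) < maxocc w₁ := by exact_mod_cast maxocc_pos w₁
  have h₂ : (0 : ℝ) < maxocc w₂ := by exact_mod_cast maxocc_pos w₂
  rw [← Real.logb_mul h₁.ne' h₂.ne']
  exact Real.logb_le_logb_of_le one_lt_two (mul_pos h₁ h₂) (by exact_mod_cast maxocc_mul_le w₁ w₂)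

lemma minS_le_entropy {k : ℕ} (w : List (Fin k)) :
    minS k w.length ≤ Real.logb 2 (maxocc w) := by
  refine csInf_le ⟨0, ?_⟩ ⟨w, rfl, rfl⟩
  rintro _ ⟨v, -, rfl⟩
  exact entropy_nonneg v

lemma minS_le {k : ℕ} (hk : 0 < k) (n : ℕ) : minS k n ≤ n := by
  have h := (minS_le_entropy (List.replicate n (⟨0, hk⟩ : Fin k))).trans (entropy_le_length _)
  simpa using h

lemma minS_superadditive {k : ℕ} (hk : 0 < k) (m n : ℕ) :
    minS k m + minS k n ≤ minS k (m + n) := by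
  refine le_csInf ⟨_, List.replicate (m + n) (⟨0, hk⟩ : Fin k), List.length_replicate, rfl⟩ ?_
  rintro _ ⟨w, hw, rfl⟩
  have h₁ := minS_le_entropy (w.take m)
  have h₂ := minS_le_entropy (w.drop m)
  have h := entropy_add_le (w.take m) (w.drop m)
  rw [List.take_append_drop] at h
  rw [List.length_take, hw, min_eq_left (Nat.le_add_right m n)] at h₁
  rw [List.length_drop, hw, Nat.add_sub_cancel_left] at h₂
  linarith

theorem stmt_6 (k : ℕ) (hk : 2 ≤ k) :
    ∃ L : ℝ, Filter.Tendsto (fun n : ℕ => minS k n / n) Filter.atTop (nhds L) := by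
  have hk0 : 0 < k := by omega
  have hsub : Subadditive fun n => -minS k n := fun m n => by
    have := minS_superadditive hk0 m n
    linarith
  have hbdd : BddBelow (Set.range fun n : ℕ => -minS k n / n) := by
    refine ⟨-1, ?_⟩
    rintro _ ⟨n, rfl⟩
    have h : minS k n / n ≤ 1 := div_le_one_of_le₀ (minS_le hk0 n) n.cast_nonneg
    simp only [neg_div]
    linarith
  refine ⟨-hsub.lim, ?_⟩
  simpa [neg_div] using (hsub.tendsto_lim hbdd).neg
end

section
/- There exists a real constant c such that for all k ≥ 2 and all n ≥ 1, minS_k(n) ≤ (1/2)·log₂(1 + √2) · n − (1/2)·log₂ n + c. -/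
/-!
The upper bound is realised by the word `xxyyxxyy…` with `B = ⌊n/2⌋` doubled letters (and one
extra letter when `n` is odd).

The alternating subword `xyxy…` of length `m` occurs
`altOcc B m = 2 ^ m * choose ⌊(B + m) / 2⌋ m` times. Put `r = √2 - 1 = (1 + √2)⁻¹`. Since
`2r + r² = 1`, the normalised number `altOcc B m * r ^ B` is at most a binomial probability with
parameters `2r` and at least `(B - 1) / 2` trials, hence `O(1/√B)` uniformly in `m` by Stirling's
formula at the mode (`exists_binWeight_le`, `exists_altOcc_le`).

An arbitrary subword `u` is compared with an alternating one through its runs. Reading the first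
block gives linear recursions in `B` for the number of occurrences. They show, by induction on `u`,
that this number is at most `dom B m = ∑ i ≤ B, (7/3) ^ i * altOcc (B - i) m`, where `m` is the
number of runs of `u` of length one: such a run follows exactly the recursion of `dom` in `m`
(`Dominated.single`), whereas longer runs are absorbed thanks to `dom (B + 1) m ≥ 7/3 * dom B m`
(`Dominated.double`, `Dominated.longer`, `exists_dominated_aux`). As `7/3 < 1 + √2`, the sum
`dom B m` is still `O((1 + √2) ^ B / √B)` (`exists_dom_le`).
-/

open List Real

/-! ### Subword counts in the block word -/

section Combinatorics

/-- The word `xxyyxxyy…` made of `B` doubled letters, alternating between `x` and `y`. -/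
def blockWord {α : Type*} : ℕ → α → α → List α
  | 0, _, _ => []
  | B + 1, x, y => x :: x :: blockWord B y x

lemma length_blockWord {α : Type*} (B : ℕ) (x y : α) : (blockWord B x y).length = 2 * B := by
  induction B generalizing x y with
  | zero => rfl
  | succ B ih => simp only [blockWord, List.length_cons, ih]; ring

variable {α : Type*} [DecidableEq α]

lemma occ_eq_count' (w u : List α) : occ w u = w.sublists'.count u :=
  (List.sublists_perm_sublists' w).count_eq u

lemma occ_nil_nil : occ ([] : List α) [] = 1 := by simp [occ]

lemma occ_nil_cons (c : α) (u : List α) : occ [] (c :: u) = 0 := by simp [occ]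

lemma occ_cons_nil (a : α) (w : List α) : occ (a :: w) [] = occ w [] := by
  simp only [occ_eq_count', List.sublists'_cons, List.count_append, Nat.add_eq_left]
  rw [List.count_eq_zero]
  simp

lemma occ_right_nil (w : List α) : occ w [] = 1 := by
  induction w with
  | nil => exact occ_nil_nil
  | cons a w ih => rw [occ_cons_nil, ih]

lemma occ_cons_cons_self (a : α) (w u : List α) :
    occ (a :: w) (a :: u) = occ w (a :: u) + occ w u := by
  simp only [occ_eq_count', List.sublists'_cons, List.count_append]
  rw [List.count_map_of_injective _ _ List.cons_injective]

lemma occ_cons_cons_ne {a c : α} (h : a ≠ c) (w u : List α) :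
    occ (a :: w) (c :: u) = occ w (c :: u) := by
  simp only [occ_eq_count', List.sublists'_cons, List.count_append, Nat.add_eq_left]
  rw [List.count_eq_zero]
  simp [h]

/-- `altOcc B m` is the number of occurrences of the alternating word `xyxy…` of length `m`
in `blockWord B x y`, for `x ≠ y`. -/
noncomputable def altOcc (B m : ℕ) : ℝ := 2 ^ m * (((B + m) / 2).choose m : ℝ)

lemma altOcc_nonneg (B m : ℕ) : 0 ≤ altOcc B m := by unfold altOcc; positivity

lemma altOcc_zero_succ (m : ℕ) : altOcc 0 (m + 1) = 0 := by
  unfold altOcc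
  rw [Nat.choose_eq_zero_of_lt (by omega)]
  simp

lemma altOcc_one_succ (m : ℕ) : altOcc 1 (m + 1) = 2 * altOcc 0 m := by
  unfold altOcc
  rw [show (1 + (m + 1)) / 2 = (0 + m) / 2 + 1 by omega, Nat.choose_succ_succ,
    Nat.choose_eq_zero_of_lt (show (0 + m) / 2 < m + 1 by omega)]
  push_cast
  ring

lemma altOcc_add_two_succ (B m : ℕ) :
    altOcc (B + 2) (m + 1) = 2 * altOcc (B + 1) m + altOcc B (m + 1) := by
  unfold altOcc
  rw [show (B + 2 + (m + 1)) / 2 = (B + 1 + m) / 2 + 1 by omega, Nat.choose_succ_succ,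
    show (B + (m + 1)) / 2 = (B + 1 + m) / 2 by omega]
  push_cast
  ring

/-- The geometrically weighted sum `∑ i ≤ B, (7/3) ^ i * altOcc (B - i) m`. The rate `7/3` lies
below `1 + √2`, so these sums are of the same order as `altOcc B m`, and it is large enough for
runs of length at least two to be absorbed. -/
noncomputable def dom : ℕ → ℕ → ℝ
  | 0, m => altOcc 0 m
  | B + 1, m => 7 / 3 * dom B m + altOcc (B + 1) m

lemma dom_nonneg (B m : ℕ) : 0 ≤ dom B m := by
  induction B with
  | zero => exact altOcc_nonneg 0 m
  | succ B ih => have := altOcc_nonneg (B + 1) m; simp only [dom]; positivity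

lemma dom_growth (B m : ℕ) : 7 / 3 * dom B m ≤ dom (B + 1) m := by
  have := altOcc_nonneg (B + 1) m
  simp only [dom]; linarith

lemma dom_le_succ (B m : ℕ) : dom B m ≤ dom (B + 1) m := by
  linarith [dom_growth B m, dom_nonneg B m]

lemma one_le_dom_zero (B : ℕ) : 1 ≤ dom B 0 := by
  induction B with
  | zero => simp [dom, altOcc]
  | succ B ih => exact ih.trans (dom_le_succ B 0)

lemma dom_zero_succ (m : ℕ) : dom 0 (m + 1) = 0 := altOcc_zero_succ m

lemma dom_one_succ (m : ℕ) : dom 1 (m + 1) = 2 * dom 0 m := by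
  simp only [dom, zero_add, altOcc_one_succ, altOcc_zero_succ]; ring

lemma dom_add_two_succ (B m : ℕ) :
    dom (B + 2) (m + 1) = 2 * dom (B + 1) m + dom B (m + 1) := by
  induction B with
  | zero =>
    simp only [dom, zero_add, altOcc_add_two_succ, altOcc_one_succ, altOcc_zero_succ]; ring
  | succ B ih =>
    rw [dom, ih, altOcc_add_two_succ]
    simp only [dom]; ring

/-- The constant is the fixed point `κ = 21/20` of `κ = 2 * (3/7) + κ * (3/7) ^ 2`, read off from
`dom_add_two_succ` and `dom_growth`. -/
lemma dom_succ_right_le (B m : ℕ) : dom B (m + 1) ≤ 21 / 20 * dom B m := by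
  induction B using Nat.twoStepInduction with
  | zero => rw [dom_zero_succ]; linarith [dom_nonneg 0 m]
  | one =>
    rw [dom_one_succ]
    linarith [dom_growth 0 m, dom_nonneg 0 m, dom_nonneg 1 m]
  | more B h0 _ =>
    rw [dom_add_two_succ]
    linarith [dom_growth B m, dom_growth (B + 1) m]

/-- Up to the factor `C`, the occurrences of `u` in every block word are dominated by
`dom · m`. -/
def Dominated (C : ℝ) (u : List α) (m : ℕ) : Prop :=
  ∀ (B : ℕ) (x y : α), x ≠ y → (occ (blockWord B x y) u : ℝ) ≤ C * dom B m

lemma Dominated.mono {C D : ℝ} {u : List α} {m : ℕ} (h : Dominated C u m) (hCD : C ≤ D) :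
    Dominated D u m := fun B x y hxy =>
  (h B x y hxy).trans (mul_le_mul_of_nonneg_right hCD (dom_nonneg B m))

lemma occ_blockWord_ne {c x : α} (h : x ≠ c) (B : ℕ) (y : α) (s : List α) :
    occ (blockWord (B + 1) x y) (c :: s) = occ (blockWord B y x) (c :: s) := by
  rw [blockWord, occ_cons_cons_ne h, occ_cons_cons_ne h]

lemma occ_blockWord_foreign {c x y : α} (hx : x ≠ c) (hy : y ≠ c) (B : ℕ) (s : List α) :
    occ (blockWord B x y) (c :: s) = 0 := by
  induction B generalizing x y with
  | zero => exact occ_nil_cons c s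
  | succ B ih => rw [occ_blockWord_ne hx, ih hy hx]

/-- It suffices to treat block words that begin with the first letter of the subword. -/
lemma dominated_of_aligned {c : α} {s : List α} {m : ℕ}
    (h : ∀ (B : ℕ) (y : α), y ≠ c → (occ (blockWord B c y) (c :: s) : ℝ) ≤ dom B m) :
    Dominated 1 (c :: s) m := by
  intro B x y hxy
  rw [one_mul]
  by_cases hx : x = c
  · subst hx; exact h B y hxy.symm
  by_cases hy : y = c
  · subst hy
    cases B with
    | zero => rw [blockWord, occ_nil_cons, Nat.cast_zero]; exact dom_nonneg 0 m
    | succ B =>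
      rw [occ_blockWord_ne hx]
      exact (h B x hx).trans (dom_le_succ B m)
  · rw [occ_blockWord_foreign hx hy, Nat.cast_zero]; exact dom_nonneg B m

/-- Prepending a run of length one raises the index by one. -/
lemma Dominated.single {c : α} {v : List α} {m : ℕ} (hv : v.head? ≠ some c)
    (h : Dominated 1 v m) : Dominated 1 (c :: v) (m + 1) := by
  have rec1 : ∀ (B : ℕ) (y : α), occ (blockWord (B + 1) c y) (c :: v)
      = occ (blockWord B y c) (c :: v) + 2 * occ (blockWord B y c) v := by
    intro B y
    rw [blockWord, occ_cons_cons_self, occ_cons_cons_self]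
    have : occ (c :: blockWord B y c) v = occ (blockWord B y c) v := by
      cases v with
      | nil => rw [occ_cons_nil]
      | cons d v =>
        refine occ_cons_cons_ne (fun hcd => hv ?_) _ _
        simp [hcd]
    rw [this]; ring
  refine dominated_of_aligned fun B => ?_
  induction B using Nat.twoStepInduction with
  | zero => intro y _; rw [blockWord, occ_nil_cons, Nat.cast_zero]; exact dom_nonneg 0 _
  | one =>
    intro y hy
    have h0 := h 0 y c hy
    rw [rec1, dom_one_succ, blockWord, occ_nil_cons]
    rw [blockWord] at h0
    push_cast; linarith
  | more B ih _ =>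
    intro y hy
    have h0 := h (B + 1) y c hy
    rw [rec1, dom_add_two_succ, occ_blockWord_ne hy]
    push_cast; linarith [ih y hy]

lemma occ_blockWord_double (B : ℕ) (c y : α) (s : List α) :
    occ (blockWord (B + 1) c y) (c :: c :: s)
      = occ (blockWord B y c) (c :: c :: s) + 2 * occ (blockWord B y c) (c :: s)
        + occ (blockWord B y c) s := by
  rw [blockWord, occ_cons_cons_self, occ_cons_cons_self, occ_cons_cons_self]; ring

/-- A run of length exactly two leaves the index unchanged. -/
lemma Dominated.double {c : α} {v : List α} {m : ℕ} (h1 : Dominated 1 (c :: v) (m + 1))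
    (h : Dominated 1 v m) : Dominated 1 (c :: c :: v) m := by
  refine dominated_of_aligned fun B => ?_
  induction B using Nat.twoStepInduction with
  | zero => intro y _; rw [blockWord, occ_nil_cons, Nat.cast_zero]; exact dom_nonneg 0 _
  | one =>
    intro y hy
    have h0 := h 0 y c hy
    rw [occ_blockWord_double]
    rw [blockWord] at h0 ⊢
    rw [occ_nil_cons, occ_nil_cons]
    push_cast; linarith [dom_le_succ 0 m]
  | more B ih _ =>
    intro y hy
    have h0 := h (B + 1) y c hy
    have h2 := h1 B c y hy.symm
    rw [occ_blockWord_double, occ_blockWord_ne hy, occ_blockWord_ne hy]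
    push_cast
    -- `(2 * (21/20) + 1) * (3/7)^2 + 3/7 < 1`
    linarith [ih y hy, dom_succ_right_le B m, dom_growth B m, dom_growth (B + 1) m,
      dom_nonneg B m]

/-- Lengthening a run of length at least two leaves the index unchanged. -/
lemma Dominated.longer {c : α} {s : List α} {m : ℕ} (h1 : Dominated 1 (c :: c :: s) m)
    (h : Dominated (21 / 20) (c :: s) m) : Dominated 1 (c :: c :: c :: s) m := by
  refine dominated_of_aligned fun B => ?_
  induction B using Nat.twoStepInduction with
  | zero => intro y _; rw [blockWord, occ_nil_cons, Nat.cast_zero]; exact dom_nonneg 0 _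
  | one =>
    intro y hy
    rw [occ_blockWord_double, blockWord, occ_nil_cons, occ_nil_cons, occ_nil_cons]
    simpa using dom_nonneg 1 m
  | more B ih _ =>
    intro y hy
    have h0 := h B c y hy.symm
    have h2 := h1 B c y hy.symm
    rw [occ_blockWord_double, occ_blockWord_ne hy, occ_blockWord_ne hy, occ_blockWord_ne hy]
    push_cast
    linarith [ih y hy, dom_growth B m, dom_growth (B + 1) m, dom_nonneg B m]

/-- Every word is dominated; the index produced is its number of runs of length one. The second
clause carries the information on the tail that the next induction step needs: it distinguishes a first
run of length one from a longer first run. -/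
lemma exists_dominated_aux (u : List α) :
    ∃ m, Dominated 1 u m ∧ ∀ c s, u = c :: s →
      (s.head? ≠ some c ∧ ∃ m', m = m' + 1 ∧ Dominated 1 s m') ∨
      (∃ s', s = c :: s' ∧ Dominated (21 / 20) s m) := by
  induction u with
  | nil =>
    refine ⟨0, fun B x y _ => ?_, by simp⟩
    rw [occ_right_nil, Nat.cast_one, one_mul]
    exact one_le_dom_zero B
  | cons c u ih =>
    obtain ⟨m, hm, hs⟩ := ih
    by_cases hc : u.head? = some c
    · obtain ⟨s, rfl⟩ : ∃ s, u = c :: s := by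
        cases u with
        | nil => simp at hc
        | cons d s => exact ⟨s, by simpa using hc⟩
      rcases hs c s rfl with ⟨_, m', rfl, hs'⟩ | ⟨s', rfl, hs'⟩
      · refine ⟨m', hm.double hs', fun d t hdt => Or.inr ?_⟩
        obtain ⟨rfl, rfl⟩ := List.cons.inj hdt
        refine ⟨s, rfl, fun B x y hxy => ?_⟩
        linarith [hm B x y hxy, dom_succ_right_le B m']
      · refine ⟨m, hm.longer hs', fun d t hdt => Or.inr ?_⟩
        obtain ⟨rfl, rfl⟩ := List.cons.inj hdt
        exact ⟨_, rfl, hm.mono (by norm_num)⟩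
    · refine ⟨m + 1, hm.single hc, fun d t hdt => Or.inl ?_⟩
      obtain ⟨rfl, rfl⟩ := List.cons.inj hdt
      exact ⟨hc, m, rfl, hm⟩

end Combinatorics

/-! ### Binomial probabilities -/

lemma factorial_le_stirling {n : ℕ} (hn : n ≠ 0) :
    (n.factorial : ℝ) ≤ exp 1 * √n * (n / exp 1) ^ n := by
  obtain ⟨k, rfl⟩ := Nat.exists_eq_succ_of_ne_zero hn
  have h := Stirling.stirlingSeq'_antitone (Nat.zero_le k)
  simp only [Function.comp_apply, Nat.succ_eq_add_one, zero_add, Stirling.stirlingSeq_one] at h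
  rw [Stirling.stirlingSeq, div_le_div_iff₀ (by positivity) (by positivity),
    Real.sqrt_mul (by norm_num)] at h
  have h2 : 0 < √(2 : ℝ) := by positivity
  refine le_of_mul_le_mul_right (h.trans_eq ?_) h2
  simp only [Nat.succ_eq_add_one]
  ring

lemma stirling_le_factorial (n : ℕ) : √n * (n / exp 1) ^ n ≤ (n.factorial : ℝ) := by
  refine le_trans ?_ (Stirling.le_factorial_stirling n)
  gcongr
  have := Real.pi_gt_three
  have hn : (0 : ℝ) ≤ n := n.cast_nonneg
  nlinarith

/-- The probability that a binomial variable with `N` trials and success weight `p`, failure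
weight `q`, equals `m`. -/
noncomputable def binWeight (p q : ℝ) (N m : ℕ) : ℝ := N.choose m * p ^ m * q ^ (N - m)

lemma div_mul_pow_le_exp {a : ℝ} (ha : 0 ≤ a) {m : ℕ} (hm : m ≠ 0) :
    (a / m) ^ m ≤ exp (a - m) := by
  have hm' : (0 : ℝ) < m := by positivity
  have h : a / m ≤ exp (a / m - 1) := by linarith [Real.add_one_le_exp (a / m - 1)]
  calc (a / m) ^ m ≤ (exp (a / m - 1)) ^ m := by gcongr
    _ = exp (a - m) := by
      rw [← Real.exp_nat_mul]; congr 1; field_simp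

/-- Stirling's formula bounds a binomial probability by the Gaussian normalisation; the
remaining relative-entropy factor is at most one. -/
lemma binWeight_le_of_pos {p q : ℝ} (hp : 0 < p) (hq : 0 < q) (hpq : p + q = 1) {m j : ℕ}
    (hm : m ≠ 0) (hj : j ≠ 0) :
    binWeight p q (m + j) m ≤ exp 1 * √((m + j : ℕ) : ℝ) / (√m * √j) := by
  have hm' : (0 : ℝ) < m := by positivity
  have hj' : (0 : ℝ) < j := by positivity
  have hch : (((m + j).choose m : ℕ) : ℝ) * (m.factorial * j.factorial) = (m + j).factorial := by
    have := Nat.add_choose_mul_factorial_mul_factorial j m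
    rw [add_comm j m] at this
    rw [← this]; push_cast; ring
  set N : ℝ := ((m + j : ℕ) : ℝ) with hN
  have hNpos : 0 < N := by rw [hN]; positivity
  have hNe : N = m + j := by rw [hN]; push_cast; ring
  have hfac := factorial_le_stirling (n := m + j) (by omega)
  rw [← hN] at hfac
  have hchoose : (((m + j).choose m : ℕ) : ℝ) * ((√m * (m / exp 1) ^ m) * (√j * (j / exp 1) ^ j))
      ≤ exp 1 * √N * (N / exp 1) ^ (m + j) := by
    refine le_trans ?_ (hch.le.trans hfac)
    gcongr
    · exact stirling_le_factorial m
    · exact stirling_le_factorial j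
  have hexp : (N * p / m) ^ m * (N * q / j) ^ j ≤ 1 := by
    calc (N * p / m) ^ m * (N * q / j) ^ j ≤ exp (N * p - m) * exp (N * q - j) := by
          gcongr
          · exact div_mul_pow_le_exp (by positivity) hm
          · exact div_mul_pow_le_exp (by positivity) hj
      _ = 1 := by
          rw [← Real.exp_add, Real.exp_eq_one_iff]
          linear_combination N * hpq + hNe
  have hE : 0 < exp 1 := Real.exp_pos 1
  rw [binWeight, show m + j - m = j by omega, le_div_iff₀ (by positivity)]
  have hX : (0 : ℝ) < (m / exp 1) ^ m * (j / exp 1) ^ j := by positivity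
  refine le_of_mul_le_mul_right ?_ hX
  calc _ = (((m + j).choose m : ℕ) : ℝ) * ((√m * (m / exp 1) ^ m) * (√j * (j / exp 1) ^ j))
          * (p ^ m * q ^ j) := by ring
    _ ≤ exp 1 * √N * (N / exp 1) ^ (m + j) * (p ^ m * q ^ j) := by gcongr
    _ = exp 1 * √N * ((m / exp 1) ^ m * (j / exp 1) ^ j)
          * ((N * p / m) ^ m * (N * q / j) ^ j) := by
        rw [pow_add]; simp only [div_pow, mul_pow]; field_simp
    _ ≤ exp 1 * √N * ((m / exp 1) ^ m * (j / exp 1) ^ j) * 1 := by gcongr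
    _ = _ := by ring

lemma binWeight_le_one {p q : ℝ} (hp : 0 < p) (hq : 0 < q) (hpq : p + q = 1) {N m : ℕ}
    (hm : m ≤ N) : binWeight p q N m ≤ 1 := by
  have h := add_pow p q N
  rw [hpq, one_pow] at h
  rw [h, binWeight]
  refine le_trans (le_of_eq ?_) (Finset.single_le_sum
    (f := fun i => p ^ i * q ^ (N - i) * (N.choose i : ℝ)) (fun i _ => by positivity)
    (Finset.mem_range.2 (Nat.lt_succ_of_le hm)))
  ring

lemma binWeight_succ {p q : ℝ} {N m : ℕ} (hm : m < N) :
    binWeight p q N (m + 1) * ((m + 1) * q) = binWeight p q N m * ((N - m) * p) := by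
  have h : ((N.choose (m + 1) : ℕ) : ℝ) * (m + 1) = N.choose m * (N - m) := by
    have := congrArg (Nat.cast (R := ℝ)) (Nat.choose_succ_right_eq N m)
    push_cast [Nat.cast_sub hm.le] at this
    exact this
  rw [binWeight, binWeight, show N - m = (N - (m + 1)) + 1 by omega, pow_succ, pow_succ]
  linear_combination (p ^ m * p * q ^ (N - (m + 1)) * q) * h

/-- A binomial mode `m` lies within distance one of the mean. -/
lemma binWeight_mode {p q : ℝ} (hp : 0 < p) (hq : 0 < q) (hpq : p + q = 1) {N m : ℕ}
    (hm : m ≤ N) (hmax : ∀ i ≤ N, binWeight p q N i ≤ binWeight p q N m) :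
    N * p - q ≤ m ∧ (m : ℝ) ≤ N * p + p := by
  have hN : (0 : ℝ) ≤ N := N.cast_nonneg
  have pos : ∀ i ≤ N, 0 < binWeight p q N i := fun i hi => by
    have := Nat.choose_pos hi
    unfold binWeight; positivity
  constructor
  · rcases hm.eq_or_lt with rfl | hlt
    · nlinarith
    · have h1 := hmax (m + 1) hlt
      have h2 := binWeight_succ (p := p) (q := q) hlt
      have h3 : ((N : ℝ) - m) * p ≤ (m + 1) * q := by
        refine le_of_mul_le_mul_left ?_ (pos m hm)
        rw [← h2]; gcongr
      have : (m : ℝ) * (p + q) = m := by rw [hpq, mul_one]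
      nlinarith
  · rcases Nat.eq_zero_or_pos m with rfl | hpos
    · simp; positivity
    · obtain ⟨i, rfl⟩ := Nat.exists_eq_succ_of_ne_zero hpos.ne'
      rw [Nat.succ_eq_add_one] at *
      have h1 := hmax i (by omega)
      have h2 := binWeight_succ (p := p) (q := q) (N := N) (m := i) (by omega)
      have h3 : ((i : ℝ) + 1) * q ≤ (N - i) * p := by
        have hp' := pos (i + 1) hm
        refine le_of_mul_le_mul_left ?_ hp'
        rw [h2]
        have : (i : ℝ) ≤ N := by exact_mod_cast (by omega : i ≤ N)
        have : 0 ≤ ((N : ℝ) - i) * p := mul_nonneg (by linarith) hp.le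
        gcongr
      have : (i : ℝ) * (p + q) = i := by rw [hpq, mul_one]
      push_cast
      nlinarith

/-- All probabilities of a binomial distribution with `N` trials are `O(1/√N)`: it suffices to
bound the mode, where both exponents are proportional to `N`. -/
lemma exists_binWeight_le {p q : ℝ} (hp : 0 < p) (hq : 0 < q) (hpq : p + q = 1) :
    ∃ K : ℝ, 0 < K ∧ ∀ N m : ℕ, m ≤ N → binWeight p q N m ≤ K / √(N + 1) := by
  obtain ⟨M, hM⟩ := exists_nat_ge (2 * q / p + 2 * p / q + 1)
  have hqp : 0 < 2 * q / p := by positivity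
  have hpq' : 0 < 2 * p / q := by positivity
  refine ⟨√(M + 1) + 4 * exp 1 / √(p * q), by positivity, fun N m hm => ?_⟩
  rcases lt_or_ge N M with hNM | hNM
  · refine (binWeight_le_one hp hq hpq hm).trans ?_
    rw [le_div_iff₀ (by positivity), one_mul]
    have h1 : √((N : ℝ) + 1) ≤ √(M + 1) := by
      apply Real.sqrt_le_sqrt
      have : (N : ℝ) ≤ M := by exact_mod_cast hNM.le
      linarith
    have : 0 ≤ 4 * exp 1 / √(p * q) := by positivity
    linarith
  · obtain ⟨k, hk, hmax⟩ := Finset.exists_max_image (Finset.range (N + 1)) (binWeight p q N)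
      ⟨0, by simp⟩
    have hkN : k ≤ N := Nat.lt_succ_iff.1 (Finset.mem_range.1 hk)
    have hmax' : ∀ i ≤ N, binWeight p q N i ≤ binWeight p q N k := fun i hi =>
      hmax i (Finset.mem_range.2 (Nat.lt_succ_of_le hi))
    refine (hmax' m hm).trans ?_
    obtain ⟨hlo, hhi⟩ := binWeight_mode hp hq hpq hkN hmax'
    obtain ⟨j, rfl⟩ := Nat.exists_eq_add_of_le hkN
    have hNR : (M : ℝ) ≤ (k + j : ℕ) := by exact_mod_cast hNM
    set N : ℝ := ((k + j : ℕ) : ℝ) with hN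
    have hNe : N = k + j := by rw [hN]; push_cast; ring
    have hN1 : 1 ≤ N := by linarith
    have hk' : N * p / 2 ≤ k := by
      have : 2 * q / p ≤ N := by linarith
      rw [div_le_iff₀ hp] at this
      linarith
    have hj' : N * q / 2 ≤ j := by
      have : 2 * p / q ≤ N := by linarith
      rw [div_le_iff₀ hq] at this
      have : N * (p + q) = N := by rw [hpq, mul_one]
      linarith
    have hk0 : (0 : ℝ) < k := lt_of_lt_of_le (by positivity) hk'
    have hj0 : (0 : ℝ) < j := lt_of_lt_of_le (by positivity) hj'
    refine (binWeight_le_of_pos hp hq hpq (by rintro rfl; simp at hk0)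
      (by rintro rfl; simp at hj0)).trans ?_
    rw [← hN]
    have hs : √(p * q) * N / 2 ≤ √k * √j := by
      rw [← Real.sqrt_mul hk0.le]
      apply Real.le_sqrt_of_sq_le
      calc (√(p * q) * N / 2) ^ 2 = (√(p * q)) ^ 2 * N ^ 2 / 4 := by ring
        _ = (N * p / 2) * (N * q / 2) := by rw [Real.sq_sqrt (by positivity)]; ring
        _ ≤ k * j := by gcongr
    have hs2 : √(N + 1) ≤ 2 * √N := by
      rw [Real.sqrt_le_left (by positivity), mul_pow, Real.sq_sqrt (by positivity)]
      linarith
    have hspos : 0 < √(p * q) := by positivity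
    calc exp 1 * √N / (√k * √j) ≤ exp 1 * √N / (√(p * q) * N / 2) := by gcongr
      _ = (4 * exp 1 / √(p * q)) / (2 * √N) := by
          have : 0 < √N := by positivity
          have h := Real.mul_self_sqrt (show 0 ≤ N by positivity)
          field_simp
          nlinarith
      _ ≤ (4 * exp 1 / √(p * q)) / √(N + 1) := by gcongr
      _ ≤ _ := by
          have : 0 ≤ √((M : ℝ) + 1) := by positivity
          gcongr
          linarith

/-! ### Size of the dominating sums -/

/-- The bound on the alternating subwords: with `p = 2(√2 - 1)` and `q = (√2 - 1)²` one has
`p + q = 1`, and the normalised count is at most a binomial probability. -/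
lemma exists_altOcc_le :
    ∃ K : ℝ, 0 < K ∧ ∀ B m : ℕ, altOcc B m * (√2 - 1) ^ B ≤ K / √(B + 20) := by
  have hsq : √(2 : ℝ) ^ 2 = 2 := Real.sq_sqrt (by norm_num)
  have hr0 : 0 < √(2 : ℝ) - 1 := by
    have := Real.one_lt_sqrt_two; linarith
  have hr1 : √(2 : ℝ) - 1 ≤ 1 := by
    have := Real.sqrt_two_lt_three_halves; linarith
  set r : ℝ := √2 - 1 with hr
  have hpq : 2 * r + r ^ 2 = 1 := by rw [hr]; linear_combination hsq
  obtain ⟨K, hK, hbin⟩ := exists_binWeight_le (p := 2 * r) (q := r ^ 2) (by positivity)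
    (by positivity) hpq
  refine ⟨K * √40, by positivity, fun B m => ?_⟩
  rcases lt_or_ge B m with hBm | hBm
  · rw [altOcc, Nat.choose_eq_zero_of_lt (by omega)]
    simp only [Nat.cast_zero, mul_zero, zero_mul]
    positivity
  · set N := (B + m) / 2 with hN
    have hmN : m ≤ N := by omega
    calc altOcc B m * r ^ B
        ≤ altOcc B m * r ^ (m + 2 * (N - m)) := by
          have h0 := altOcc_nonneg B m
          have := pow_le_pow_of_le_one hr0.le hr1 (show m + 2 * (N - m) ≤ B by omega)
          gcongr
      _ = binWeight (2 * r) (r ^ 2) N m := by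
          rw [altOcc, binWeight, ← hN, pow_add, pow_mul, mul_pow]; ring
      _ ≤ K / √(N + 1) := hbin N m hmN
      _ ≤ K * √40 / √(B + 20) := by
          rw [div_le_div_iff₀ (by positivity) (by positivity), mul_assoc,
            ← Real.sqrt_mul (by norm_num)]
          have : (B : ℝ) + 20 ≤ 40 * (N + 1) := by
            exact_mod_cast (show B + 20 ≤ 40 * (N + 1) by omega)
          gcongr

/-- The geometric weights of `dom` cost only a constant factor. The shift by `20` makes
`7/3 * (√2 - 1) * √(B + 21) / √(B + 20)` bounded away from `1` for all `B`. -/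
lemma exists_dom_le :
    ∃ K : ℝ, 0 < K ∧ ∀ B m : ℕ, dom B m * (√2 - 1) ^ B ≤ K / √(B + 20) := by
  obtain ⟨K, hK, hA⟩ := exists_altOcc_le
  have hr0 : 0 < √(2 : ℝ) - 1 := by
    have := Real.one_lt_sqrt_two; linarith
  have hr1 : √(2 : ℝ) - 1 ≤ 4143 / 10000 := by
    have : √(2 : ℝ) ≤ 14143 / 10000 := by
      rw [Real.sqrt_le_left (by norm_num)]; norm_num
    linarith
  set r : ℝ := √2 - 1 with hr
  refine ⟨125 * K, by positivity, fun B m => ?_⟩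
  induction B with
  | zero =>
    refine (hA 0 m).trans ?_
    gcongr
    linarith
  | succ B ih =>
    have hA' := hA (B + 1) m
    have hs : 1 / √((B : ℝ) + 20) ≤ 41 / 40 * (1 / √((B + 1 : ℕ) + 20)) := by
      rw [mul_one_div, div_le_div_iff₀ (by positivity) (by positivity), one_mul,
        Real.sqrt_le_left (by positivity), mul_pow, Real.sq_sqrt (by positivity)]
      have : (0 : ℝ) ≤ B := B.cast_nonneg
      push_cast; linarith
    have h0 : 0 ≤ dom B m * r ^ B := mul_nonneg (dom_nonneg B m) (by positivity)
    set X : ℝ := 1 / √((B + 1 : ℕ) + 20) with hX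
    have hX0 : 0 < X := by rw [hX]; positivity
    rw [div_eq_mul_one_div] at ih hA' ⊢
    rw [← hX] at hA' ⊢
    have ih' : dom B m * r ^ B ≤ 125 * K * (41 / 40 * X) := ih.trans (by gcongr)
    calc dom (B + 1) m * r ^ (B + 1)
        = 7 / 3 * r * (dom B m * r ^ B) + altOcc (B + 1) m * r ^ (B + 1) := by
          rw [dom, pow_succ]; ring
      _ ≤ 7 / 3 * (4143 / 10000) * (125 * K * (41 / 40 * X)) + K * X := by gcongr
      _ ≤ 125 * K * X := by nlinarith [mul_pos hK hX0]

lemma exists_occ_blockWord_le :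
    ∃ K : ℝ, 0 < K ∧ ∀ {α : Type} [DecidableEq α] (x y : α), x ≠ y → ∀ (B : ℕ) (u : List α),
      (occ (blockWord B x y) u : ℝ) ≤ K * (1 + √2) ^ B / √(B + 20) := by
  obtain ⟨K, hK, h⟩ := exists_dom_le
  refine ⟨K, hK, fun {α} _ x y hxy B u => ?_⟩
  obtain ⟨m, hm, -⟩ := exists_dominated_aux u
  have hinv : (√(2 : ℝ) - 1) ^ B * (1 + √2) ^ B = 1 := by
    rw [← mul_pow]
    have : (√(2 : ℝ) - 1) * (1 + √2) = 1 := by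
      linear_combination Real.sq_sqrt (show (0 : ℝ) ≤ 2 by norm_num)
    rw [this, one_pow]
  calc (occ (blockWord B x y) u : ℝ) ≤ dom B m := by simpa using hm B x y hxy
    _ = dom B m * (√2 - 1) ^ B * (1 + √2) ^ B := by rw [mul_assoc, hinv, mul_one]
    _ ≤ K / √(B + 20) * (1 + √2) ^ B := by gcongr; exact h B m
    _ = _ := by ring

/-! ### Passage to the entropy -/

lemma occ_cons_le_two_mul {α : Type*} [DecidableEq α] (a : α) {w : List α} {M : ℝ}
    (h : ∀ u, (occ w u : ℝ) ≤ M) (u : List α) : (occ (a :: w) u : ℝ) ≤ 2 * M := by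
  have hM : 0 ≤ M := (Nat.cast_nonneg _).trans (h [])
  cases u with
  | nil => rw [occ_cons_nil]; linarith [h []]
  | cons c u =>
    by_cases hc : a = c
    · subst hc
      rw [occ_cons_cons_self]; push_cast; linarith [h u, h (a :: u)]
    · rw [occ_cons_cons_ne hc]; linarith [h (c :: u)]

lemma maxocc_mem {α : Type*} [DecidableEq α] (w : List α) : ∃ u, occ w u = maxocc w := by
  refine Nat.sSup_mem (s := {n : ℕ | ∃ u : List α, occ w u = n}) ⟨_, [], rfl⟩
    ⟨w.sublists.length, ?_⟩
  rintro _ ⟨u, rfl⟩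
  exact List.count_le_length

lemma one_le_maxocc {α : Type*} [DecidableEq α] (w : List α) : 1 ≤ maxocc w := by
  refine le_csSup (s := {n : ℕ | ∃ u : List α, occ w u = n}) ⟨w.sublists.length, ?_⟩
    ⟨[], occ_right_nil w⟩
  rintro _ ⟨u, rfl⟩
  exact List.count_le_length

lemma minS_le_s11 {k n : ℕ} {w : List (Fin k)} (hw : w.length = n) :
    minS k n ≤ Real.logb 2 (maxocc w) := by
  refine csInf_le ⟨0, ?_⟩ ⟨w, hw, rfl⟩
  rintro _ ⟨v, -, rfl⟩
  exact Real.logb_nonneg (by norm_num) (by exact_mod_cast one_le_maxocc v)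

theorem stmt_11 :
    ∃ c : ℝ, ∀ k : ℕ, 2 ≤ k → ∀ n : ℕ, 1 ≤ n →
      minS k n ≤ (1 / 2) * Real.logb 2 (1 + Real.sqrt 2) * n
        - (1 / 2) * Real.logb 2 n + c := by
  obtain ⟨K, hK, hocc⟩ := exists_occ_blockWord_le
  refine ⟨Real.logb 2 (2 * K) + 1 / 2, fun k hk n hn => ?_⟩
  set B := n / 2 with hB
  set x : Fin k := ⟨0, by omega⟩
  set y : Fin k := ⟨1, by omega⟩
  have hxy : x ≠ y := by simp [x, y]
  set M : ℝ := K * (1 + √2) ^ B / √(B + 20) with hM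
  have hMpos : 0 < M := by positivity
  have hbound := hocc x y hxy B
  rw [← hM] at hbound
  -- an odd length is reached by one extra letter, which at most doubles the counts
  obtain ⟨w, hw, hwM⟩ : ∃ w : List (Fin k), w.length = n ∧ ∀ u, (occ w u : ℝ) ≤ 2 * M := by
    rcases Nat.even_or_odd' n with ⟨t, ht | ht⟩
    · exact ⟨blockWord B x y, by rw [length_blockWord]; omega,
        fun u => by linarith [hbound u]⟩
    · exact ⟨x :: blockWord B x y, by rw [List.length_cons, length_blockWord]; omega,
        occ_cons_le_two_mul x hbound⟩
  refine (minS_le_s11 hw).trans ?_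
  obtain ⟨u, hu⟩ := maxocc_mem w
  have h1 : (0 : ℝ) < maxocc w := by exact_mod_cast one_le_maxocc w
  have h2 : (maxocc w : ℝ) ≤ 2 * M := hu ▸ hwM u
  have h3 := Real.logb_le_logb_of_le (b := 2) (by norm_num) h1 h2
  have hlog : Real.logb 2 (2 * M)
      = Real.logb 2 (2 * K) + B * Real.logb 2 (1 + √2) - 1 / 2 * Real.logb 2 (B + 20) := by
    rw [hM, show 2 * (K * (1 + √2) ^ B / √((B : ℝ) + 20))
        = (2 * K) * (1 + √2) ^ B / √((B : ℝ) + 20) by ring,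
      Real.logb_div (by positivity) (by positivity),
      Real.logb_mul (by positivity) (by positivity), Real.logb_pow,
      Real.sqrt_eq_rpow ((B : ℝ) + 20),
      Real.logb_rpow_eq_mul_logb_of_pos (by positivity)]
  have hL : 0 ≤ Real.logb 2 (1 + √2) :=
    Real.logb_nonneg (by norm_num) (by linarith [Real.sqrt_nonneg 2])
  have hBn : (B : ℝ) ≤ n / 2 := Nat.cast_div_le
  have hn0 : (0 : ℝ) < n := by exact_mod_cast hn
  have hnB : Real.logb 2 n - 1 ≤ Real.logb 2 (B + 20) := by
    have hle : (n : ℝ) / 2 ≤ B + 20 := by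
      have : (n : ℝ) ≤ 2 * (B + 20) := by exact_mod_cast (show n ≤ 2 * (B + 20) by omega)
      linarith
    have := Real.logb_le_logb_of_le (b := 2) (by norm_num) (by positivity) hle
    rwa [Real.logb_div hn0.ne' (by norm_num), Real.logb_self_eq_one (by norm_num)] at this
  have := mul_le_mul_of_nonneg_right hBn hL
  linarith
end
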